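/- For all x ≥ 2 and Q ≥ 1, ∑_{q ≤ Q} ∑_{a ∈ G_q} (ψ_K(x;q,a) − x/φ_K(q))² ≪ Q·(log Qx)⁴ + ∑_{q ≤ Q} (1/φ(q)) ∑_{χ mod q} |ψ'_K(x, χ*∘N)|², where for each Dirichlet character χ modulo q, χ* denotes the primitive character inducing χ, and the implied constant depends only on K. -/

import Mathlib

/-!
Setting: `K` is a number field, Galois over `ℚ`, with ring of integers `𝓞 K`.
We formalize the objects from Smith, "A generalization of the
Barban-Davenport-Halberstam Theorem to number fields".
-/

open NumberField Ideal
open scoped Classical BigOperators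

noncomputable section

/-- `𝔞` is a (positive) power of a nonzero prime ideal of `𝓞 K`. -/
def IsPrimeIdealPower {K : Type*} [Field K] [NumberField K] (𝔞 : Ideal (𝓞 K)) : Prop :=
  ∃ (𝔭 : Ideal (𝓞 K)) (m : ℕ), 𝔭.IsPrime ∧ 𝔭 ≠ ⊥ ∧ 1 ≤ m ∧ 𝔞 = 𝔭 ^ m

/-- The von Mangoldt function on ideals of `𝓞 K`: `Λ_K(𝔭^m) = log N𝔭`, and `0` otherwise.
(For `𝔞 = 𝔭^m` with `𝔭` prime, the radical of `𝔞` is `𝔭`.) -/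
def LambdaK (K : Type*) [Field K] [NumberField K] (𝔞 : Ideal (𝓞 K)) : ℝ :=
  if IsPrimeIdealPower 𝔞 then Real.log (absNorm 𝔞.radical) else 0

/-- `ψ_K(x; q, a) = ∑_{N𝔭^m ≤ x, N𝔭^m ≡ a (mod q)} log N𝔭`. -/
def psiK (K : Type*) [Field K] [NumberField K] (x : ℝ) (q : ℕ) (a : ZMod q) : ℝ :=
  ∑' 𝔞 : Ideal (𝓞 K),
    if (absNorm 𝔞 : ℝ) ≤ x ∧ ((absNorm 𝔞 : ZMod q) = a) then LambdaK K 𝔞 else 0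

/-- `G_q`: the image of `Gal(K(ζ_q)/K)` in `(ℤ/qℤ)ˣ` under restriction to `ℚ(ζ_q)` followed
by the canonical isomorphism `Gal(ℚ(ζ_q)/ℚ) ≅ (ℤ/qℤ)ˣ`; concretely, the range of the map
sending `σ ∈ Gal(K(ζ_q)/K)` to the exponent `a ∈ (ℤ/qℤ)ˣ` with `σ(ζ_q) = ζ_q^a`. -/
def Gq (K : Type*) [Field K] [NumberField K] (q : ℕ) : Subgroup (ZMod q)ˣ :=
  if h : 0 < q then
    haveI : NeZero q := ⟨h.ne'⟩
    haveI : NeZero (((⟨q, h⟩ : ℕ+) : ℕ) : K) := ⟨Nat.cast_ne_zero.mpr h.ne'⟩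
    ((IsCyclotomicExtension.zeta_spec (⟨q, h⟩ : ℕ+) K
        (CyclotomicField (⟨q, h⟩ : ℕ+) K)).autToPow K).range
  else ⊥

/-- `φ_K(q) = |G_q|`. -/
def phiK (K : Type*) [Field K] [NumberField K] (q : ℕ) : ℕ :=
  Nat.card (Gq K q)

/-- `ψ_K(x, χ∘N) = ∑_{N𝔞 ≤ x} χ(N𝔞) Λ_K(𝔞)`. -/
def psiKChi (K : Type*) [Field K] [NumberField K] (x : ℝ) {q : ℕ}
    (χ : DirichletCharacter ℂ q) : ℂ :=
  ∑' 𝔞 : Ideal (𝓞 K),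
    if (absNorm 𝔞 : ℝ) ≤ x then χ (absNorm 𝔞 : ZMod q) * (LambdaK K 𝔞 : ℂ) else 0

/-- `ψ'_K(x, χ∘N)`: equals `ψ_K(x, χ∘N) − x` when `χ` is trivial on `G_q`,
and `ψ_K(x, χ∘N)` otherwise. -/
def psiKChi' (K : Type*) [Field K] [NumberField K] (x : ℝ) {q : ℕ}
    (χ : DirichletCharacter ℂ q) : ℂ :=
  if ∀ a ∈ Gq K q, χ (a : ZMod q) = 1 then psiKChi K x χ - x else psiKChi K x χ

/-- The common residue degree `f(K/ℚ; p)` of the primes of `K` above `p`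
(well-defined when `K/ℚ` is Galois): any prime `𝔭` above `p` has `N𝔭 = p^f`. -/
def resDeg (K : Type*) [Field K] [NumberField K] (p : ℕ) : ℕ :=
  if h : ∃ 𝔭 : Ideal (𝓞 K), 𝔭.IsPrime ∧ 𝔭 ≠ ⊥ ∧ (p : 𝓞 K) ∈ 𝔭 then
    (absNorm h.choose).factorization p
  else 0

/-- `D_K(n)`: the number of prime ideal powers `𝔭^m` of `𝓞 K` with `N𝔭^m = n`. -/
def DK (K : Type*) [Field K] [NumberField K] (n : ℕ) : ℕ :=
  Nat.card {𝔞 : Ideal (𝓞 K) // IsPrimeIdealPower 𝔞 ∧ absNorm 𝔞 = n}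

/-- `Λ_K^*(n) = f(K/ℚ; p) · log p` if `n = p^k` is a prime power, and `0` otherwise. -/
def LambdaStarK (K : Type*) [Field K] [NumberField K] (n : ℕ) : ℝ :=
  if IsPrimePow n then (resDeg K n.minFac : ℝ) * Real.log n.minFac else 0

end

section GaloisImage

variable {K : Type*} [Field K] [NumberField K]

lemma mem_Gq_iff {q : ℕ} (hq : 0 < q) {a : (ZMod q)ˣ} :
    a ∈ Gq K q ↔ ∃ τ : AlgebraicClosure K ≃ₐ[K] AlgebraicClosure K,
      ∀ ζ : AlgebraicClosure K, ζ ^ q = 1 → τ ζ = ζ ^ (a : ZMod q).val := by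
  have : NeZero q := ⟨hq.ne'⟩
  have hgal : IsGalois K (CyclotomicField q K) := IsCyclotomicExtension.isGalois {q} K _
  let f : CyclotomicField q K →ₐ[K] AlgebraicClosure K := IsAlgClosed.lift
  let : Algebra (CyclotomicField q K) (AlgebraicClosure K) := f.toRingHom.toAlgebra
  have : IsScalarTower K (CyclotomicField q K) (AlgebraicClosure K) :=
    IsScalarTower.of_algebraMap_eq fun r => (f.commutes r).symm
  have hz := IsCyclotomicExtension.zeta_spec q K (CyclotomicField q K)
  set z := IsCyclotomicExtension.zeta q K (CyclotomicField q K) with hzdef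
  have hz' : IsPrimitiveRoot (algebraMap _ (AlgebraicClosure K) z) q :=
    hz.map_of_injective (algebraMap (CyclotomicField q K) (AlgebraicClosure K)).injective
  have hG : a ∈ Gq K q ↔ ∃ σ : CyclotomicField q K ≃ₐ[K] CyclotomicField q K,
      hz.autToPow K σ = a := by
    rw [Gq, dif_pos hq]
    rfl
  rw [hG]
  constructor
  · rintro ⟨σ, rfl⟩
    refine ⟨σ.liftNormal (AlgebraicClosure K), fun ζ hζ => ?_⟩
    obtain ⟨i, -, rfl⟩ := hz'.eq_pow_of_pow_eq_one hζ
    rw [map_pow, AlgEquiv.liftNormal_commutes, ← hz.autToPow_spec K σ, map_pow, ← pow_mul,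
      ← pow_mul, mul_comm]
  · rintro ⟨τ, hτ⟩
    refine ⟨τ.restrictNormal (CyclotomicField q K), ?_⟩
    have h1 := hτ _ hz'.pow_eq_one
    rw [← AlgEquiv.restrictNormal_commutes, ← hz.autToPow_spec K, map_pow] at h1
    have h2 := hz'.pow_inj (ZMod.val_lt _) (ZMod.val_lt _) h1
    exact Units.ext (ZMod.val_injective q h2)

lemma map_unitsMap_Gq {d q : ℕ} (hq : 0 < q) (hd : d ∣ q) :
    (Gq K q).map (ZMod.unitsMap hd) = Gq K d := by
  have hd0 : 0 < d := Nat.pos_of_dvd_of_pos hd hq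
  have : NeZero q := ⟨hq.ne'⟩
  have : NeZero d := ⟨hd0.ne'⟩
  have hred (a : (ZMod q)ˣ) (τ : AlgebraicClosure K ≃ₐ[K] AlgebraicClosure K)
      (h : ∀ ζ : AlgebraicClosure K, ζ ^ q = 1 → τ ζ = ζ ^ (a : ZMod q).val)
      (ζ : AlgebraicClosure K) (hζ : ζ ^ d = 1) :
      τ ζ = ζ ^ ((ZMod.unitsMap hd a : (ZMod d)ˣ) : ZMod d).val := by
    obtain ⟨e, rfl⟩ := hd
    rw [h ζ (by rw [pow_mul, hζ, one_pow]), ZMod.unitsMap_val, ZMod.cast_eq_val,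
      ZMod.val_natCast, ← pow_mod_orderOf, ← Nat.mod_mod_of_dvd _ (orderOf_dvd_of_pow_eq_one hζ),
      pow_mod_orderOf]
  ext b
  rw [Subgroup.mem_map, mem_Gq_iff hd0]
  constructor
  · rintro ⟨a, ha, rfl⟩
    obtain ⟨τ, hτ⟩ := (mem_Gq_iff hq).1 ha
    exact ⟨τ, hred a τ hτ⟩
  · rintro ⟨τ, hτ⟩
    obtain ⟨z, hz⟩ : ∃ z : AlgebraicClosure K, IsPrimitiveRoot z q :=
      HasEnoughRootsOfUnity.exists_primitiveRoot _ _
    have hpow (ζ : AlgebraicClosure K) (hζ : ζ ^ q = 1) :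
        τ ζ = ζ ^ (hz.autToPow K τ : ZMod q).val := by
      obtain ⟨i, -, rfl⟩ := hz.eq_pow_of_pow_eq_one hζ
      rw [map_pow, ← hz.autToPow_spec K τ, ← pow_mul, ← pow_mul, mul_comm]
    refine ⟨hz.autToPow K τ, (mem_Gq_iff hq).2 ⟨τ, hpow⟩, ?_⟩
    have hw : IsPrimitiveRoot (z ^ (q / d)) d :=
      hz.pow hq (Nat.div_mul_cancel hd).symm
    have h := (hred _ τ hpow _ hw.pow_eq_one).symm.trans (hτ _ hw.pow_eq_one)
    exact Units.ext (ZMod.val_injective d (hw.pow_inj (ZMod.val_lt _) (ZMod.val_lt _) h))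

end GaloisImage

section Characters

/-- Parseval's identity for the group `(ℤ/qℤ)ˣ`. -/
lemma sum_norm_sq_sum_char_mul {q : ℕ} [NeZero q] (f : (ZMod q)ˣ → ℂ) :
    ∑ χ : DirichletCharacter ℂ q, ‖∑ a : (ZMod q)ˣ, χ a * f a‖ ^ 2 =
      q.totient * ∑ a : (ZMod q)ˣ, ‖f a‖ ^ 2 := by
  have hnorm (z : ℂ) : ((‖z‖ ^ 2 : ℝ) : ℂ) = starRingEnd ℂ z * z := by
    rw [mul_comm, Complex.mul_conj, Complex.normSq_eq_norm_sq]
  have hinv (χ : DirichletCharacter ℂ q) (a : (ZMod q)ˣ) :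
      starRingEnd ℂ (χ a) = χ (a : ZMod q)⁻¹ := by
    rw [ZMod.inv_coe_unit, starRingEnd_apply, ← MulChar.star_apply, MulChar.star_eq_inv,
      MulChar.inv_apply, Ring.inverse_unit]
  apply Complex.ofReal_injective
  simp only [Complex.ofReal_sum, Complex.ofReal_mul, Complex.ofReal_natCast, hnorm, map_sum,
    map_mul, hinv, Finset.sum_mul_sum]
  rw [Finset.sum_comm, Finset.mul_sum]
  refine Finset.sum_congr rfl fun a _ => ?_
  rw [Finset.sum_comm]
  have (b : (ZMod q)ˣ) : ∑ χ : DirichletCharacter ℂ q,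
      χ (a : ZMod q)⁻¹ * starRingEnd ℂ (f a) * (χ b * f b) =
      (if (a : ZMod q) = b then (q.totient : ℂ) else 0) * (starRingEnd ℂ (f a) * f b) := by
    rw [← DirichletCharacter.sum_char_inv_mul_char_eq ℂ a.isUnit, Finset.sum_mul]
    exact Finset.sum_congr rfl fun χ _ => by ring
  simp only [this, Units.val_inj, ite_mul, zero_mul, Finset.sum_ite_eq, Finset.mem_univ, if_true]

/-- The sum of a character over a subgroup is its order if the character is trivial there, else `0`. -/
lemma sum_subgroup_char {q : ℕ} [NeZero q] (H : Subgroup (ZMod q)ˣ)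
    (χ : DirichletCharacter ℂ q) :
    ∑ a : (ZMod q)ˣ, (if a ∈ H then χ a else 0) =
      if ∀ a ∈ H, χ (a : ZMod q) = 1 then (Nat.card H : ℂ) else 0 := by
  have hsum : ∑ a : (ZMod q)ˣ, (if a ∈ H then χ a else 0) = ∑ a : H, χ (a : (ZMod q)ˣ) := by
    rw [← Finset.sum_filter]
    exact Finset.sum_subtype _ (by simp) _
  rw [hsum]
  split_ifs with h
  · rw [Finset.sum_congr rfl fun (a : H) _ => h _ a.prop]
    simp [Nat.card_eq_fintype_card]
  · push Not at h
    obtain ⟨b, hb, hb1⟩ := h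
    refine eq_zero_of_mul_eq_self_left hb1 ?_
    rw [Finset.mul_sum]
    refine Fintype.sum_bijective _ (Group.mulLeft_bijective (⟨b, hb⟩ : H)) _ _ fun a => ?_
    simp

variable {K : Type*} [Field K] [NumberField K]

lemma primitiveCharacter_unitsMap {q : ℕ} (χ : DirichletCharacter ℂ q) (a : (ZMod q)ˣ) :
    χ.primitiveCharacter (ZMod.unitsMap χ.conductor_dvd_level a : (ZMod χ.conductor)ˣ) = χ a := by
  conv_rhs => rw [← χ.changeLevel_primitiveCharacter]
  rw [DirichletCharacter.changeLevel_eq_cast_of_dvd, ZMod.unitsMap_val]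

lemma primitiveCharacter_trivial_iff {q : ℕ} (hq : 0 < q) (χ : DirichletCharacter ℂ q) :
    (∀ a ∈ Gq K χ.conductor, χ.primitiveCharacter (a : ZMod χ.conductor) = 1) ↔
      ∀ a ∈ Gq K q, χ (a : ZMod q) = 1 := by
  rw [← map_unitsMap_Gq hq χ.conductor_dvd_level]
  simp only [Subgroup.mem_map, forall_exists_index, and_imp, forall_apply_eq_imp_iff₂,
    primitiveCharacter_unitsMap]

end Characters

section Ideals

variable {K : Type*} [Field K] [NumberField K]

lemma finite_absNorm_le (x : ℝ) : {𝔞 : Ideal (𝓞 K) | (absNorm 𝔞 : ℝ) ≤ x}.Finite := by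
  refine (finite_setOfPred_absNorm_le (S := 𝓞 K) ⌊x⌋₊).subset fun 𝔞 h => ?_
  exact Nat.le_floor h

lemma LambdaK_nonneg (𝔞 : Ideal (𝓞 K)) : 0 ≤ LambdaK K 𝔞 := by
  rw [LambdaK]
  split_ifs
  · exact Real.log_natCast_nonneg _
  · exact le_rfl

lemma psiK_eq_sum (x : ℝ) (q : ℕ) (a : ZMod q) :
    psiK K x q a = ∑ 𝔞 ∈ (finite_absNorm_le (K := K) x).toFinset,
      if (absNorm 𝔞 : ZMod q) = a then LambdaK K 𝔞 else 0 := by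
  rw [psiK, tsum_eq_sum (s := (finite_absNorm_le (K := K) x).toFinset)]
  · exact Finset.sum_congr rfl fun 𝔞 h => by
      rw [Set.Finite.mem_toFinset, Set.mem_ofPred_eq] at h
      simp [h]
  · intro 𝔞 h
    rw [Set.Finite.mem_toFinset, Set.mem_ofPred_eq] at h
    simp [h]

lemma psiKChi_eq_sum (x : ℝ) {q : ℕ} (χ : DirichletCharacter ℂ q) :
    psiKChi K x χ = ∑ 𝔞 ∈ (finite_absNorm_le (K := K) x).toFinset,
      χ (absNorm 𝔞 : ZMod q) * (LambdaK K 𝔞 : ℂ) := by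
  rw [psiKChi, tsum_eq_sum (s := (finite_absNorm_le (K := K) x).toFinset)]
  · exact Finset.sum_congr rfl fun 𝔞 h => by
      rw [Set.Finite.mem_toFinset, Set.mem_ofPred_eq] at h
      simp [h]
  · intro 𝔞 h
    rw [Set.Finite.mem_toFinset, Set.mem_ofPred_eq] at h
    simp [h]

lemma psiKChi_eq_sum_psiK (x : ℝ) {q : ℕ} [NeZero q] (χ : DirichletCharacter ℂ q) :
    psiKChi K x χ = ∑ a : (ZMod q)ˣ, χ a * (psiK K x q a : ℂ) := by
  simp only [psiKChi_eq_sum, psiK_eq_sum, Complex.ofReal_sum, Finset.mul_sum]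
  rw [Finset.sum_comm]
  refine Finset.sum_congr rfl fun 𝔞 _ => ?_
  by_cases h : IsUnit (absNorm 𝔞 : ZMod q)
  · obtain ⟨u, hu⟩ := h
    rw [Finset.sum_eq_single u]
    · simp [hu]
    · intro b _ hb
      rw [← hu, if_neg fun h => hb (Units.ext h.symm)]
      simp
    · simp
  · rw [χ.map_nonunit h, zero_mul, Finset.sum_eq_zero]
    intro a _
    rw [if_neg fun h' => h (by rw [h']; exact a.isUnit)]
    simp

lemma psiKChi'_eq_sum (x : ℝ) {q : ℕ} [NeZero q] (χ : DirichletCharacter ℂ q) :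
    psiKChi' K x χ = ∑ a : (ZMod q)ˣ, χ a *
      ((psiK K x q a - if a ∈ Gq K q then x / phiK K q else 0 : ℝ) : ℂ) := by
  have hcard : (phiK K q : ℂ) ≠ 0 := by
    rw [phiK, Nat.cast_ne_zero]
    exact Nat.card_pos.ne'
  have hmain : ∑ a : (ZMod q)ˣ, χ a * ((if a ∈ Gq K q then x / phiK K q else 0 : ℝ) : ℂ) =
      if ∀ a ∈ Gq K q, χ (a : ZMod q) = 1 then (x : ℂ) else 0 := by
    have h (a : (ZMod q)ˣ) : χ a * ((if a ∈ Gq K q then x / phiK K q else 0 : ℝ) : ℂ) =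
        (if a ∈ Gq K q then χ a else 0) * ((x : ℂ) / phiK K q) := by
      split_ifs <;> simp
    rw [Finset.sum_congr rfl fun a _ => h a, ← Finset.sum_mul, sum_subgroup_char]
    split_ifs
    · exact mul_div_cancel₀ _ hcard
    · exact zero_mul _
  simp only [Complex.ofReal_sub, mul_sub, Finset.sum_sub_distrib]
  rw [hmain, psiKChi', psiKChi_eq_sum_psiK]
  split_ifs <;> simp

lemma finsum_sq_le_sum_norm_psiKChi' (x : ℝ) {q : ℕ} (hq : 0 < q) :
    ∑ᶠ a ∈ Gq K q, (psiK K x q (a : ZMod q) - x / phiK K q) ^ 2 ≤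
      (1 / q.totient : ℝ) * ∑ χ : DirichletCharacter ℂ q, ‖psiKChi' K x χ‖ ^ 2 := by
  have : NeZero q := ⟨hq.ne'⟩
  have hφ : (q.totient : ℝ) ≠ 0 := Nat.cast_ne_zero.2 (Nat.totient_pos.2 hq).ne'
  simp only [psiKChi'_eq_sum]
  rw [sum_norm_sq_sum_char_mul, ← mul_assoc, one_div_mul_cancel hφ, one_mul,
    finsum_eq_sum_of_fintype]
  refine Finset.sum_le_sum fun a _ => ?_
  rw [Complex.norm_real, Real.norm_eq_abs, sq_abs]
  by_cases h : a ∈ Gq K q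
  · simp [h]
  · simp [h, sq_nonneg]

end Ideals

section PrimesDividingModulus

variable {K : Type*} [Field K] [NumberField K]

lemma natCast_mem_of_not_coprime_absNorm {𝔭 : Ideal (𝓞 K)} (hp : 𝔭.IsPrime) (h0 : 𝔭 ≠ ⊥)
    {q : ℕ} (h : ¬ (absNorm 𝔭).Coprime q) : (q : 𝓞 K) ∈ 𝔭 := by
  obtain ⟨p, hpp, hpN, e, rfl⟩ := Nat.Prime.not_coprime_iff_dvd.1 h
  have : Finite (𝓞 K ⧸ 𝔭) := Ideal.finiteQuotientOfFreeOfNeBot 𝔭 h0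
  have : Fact p.Prime := ⟨hpp⟩
  rw [absNorm_apply, Submodule.cardQuot_apply] at hpN
  obtain ⟨y, hy⟩ := exists_prime_addOrderOf_dvd_card' (G := 𝓞 K ⧸ 𝔭) p hpN
  obtain ⟨y, rfl⟩ := Ideal.Quotient.mk_surjective y
  have hy0 : y ∉ 𝔭 := fun hmem => by
    rw [Ideal.Quotient.eq_zero_iff_mem.2 hmem, addOrderOf_zero] at hy
    exact hpp.one_lt.ne hy
  have hpy : (p : 𝓞 K) * y ∈ 𝔭 := by
    rw [← Ideal.Quotient.eq_zero_iff_mem, map_mul, map_natCast, ← nsmul_eq_mul, ← hy,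
      addOrderOf_nsmul_eq_zero]
  rw [Nat.cast_mul]
  exact 𝔭.mul_mem_right _ ((hp.mem_or_mem hpy).resolve_right hy0)

lemma span_natCast_ne_bot {q : ℕ} (hq : 0 < q) : span {(q : 𝓞 K)} ≠ ⊥ := by
  rw [Ne, span_singleton_eq_bot]
  exact_mod_cast hq.ne'

lemma one_lt_absNorm_of_mem_normalizedFactors {I 𝔭 : Ideal (𝓞 K)}
    (h : 𝔭 ∈ UniqueFactorizationMonoid.normalizedFactors I) : 1 < absNorm 𝔭 := by
  have hprime := UniqueFactorizationMonoid.prime_of_normalized_factor 𝔭 h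
  have : absNorm 𝔭 ≠ 0 := absNorm_ne_zero_iff_mem_nonZeroDivisors.2
    (mem_nonZeroDivisors_of_ne_zero hprime.ne_zero)
  have : absNorm 𝔭 ≠ 1 := fun h => hprime.not_isUnit
    (Ideal.isUnit_iff.2 (absNorm_eq_one_iff.1 h))
  omega

/-- The number of primes of `K` dividing `q` is `O(log q)`. -/
lemma card_primeFactors_span_natCast_le {q : ℕ} (hq : 0 < q) :
    ((UniqueFactorizationMonoid.normalizedFactors
      (span {(q : 𝓞 K)})).toFinset.card : ℝ) ≤
        Module.finrank ℚ K * Real.log q / Real.log 2 := by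
  have hq0 := span_natCast_ne_bot (K := K) hq
  set P := (UniqueFactorizationMonoid.normalizedFactors (span {(q : 𝓞 K)})).toFinset with hP
  have hdvd : ∏ 𝔭 ∈ P, 𝔭 ∣ span {(q : 𝓞 K)} := by
    conv_rhs => rw [← Ideal.prod_normalizedFactors_eq_self hq0]
    exact Multiset.toFinset_prod_dvd_prod _
  have hnorm : ∏ 𝔭 ∈ P, absNorm 𝔭 ≤ q ^ Module.finrank ℚ K := by
    have h1 : absNorm (span {(q : 𝓞 K)}) = q ^ Module.finrank ℚ K := by
      rw [absNorm_span_natCast, RingOfIntegers.rank]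
    rw [← map_prod, ← h1]
    refine Nat.le_of_dvd ?_ (absNorm_dvd_absNorm_of_le (le_of_dvd hdvd))
    rw [h1]
    positivity
  have h2 : 2 ^ P.card ≤ q ^ Module.finrank ℚ K := by
    refine le_trans ?_ hnorm
    rw [← Finset.prod_const]
    refine Finset.prod_le_prod' fun 𝔭 h => ?_
    exact one_lt_absNorm_of_mem_normalizedFactors (Multiset.mem_toFinset.1 h)
  rw [le_div_iff₀ (Real.log_pos one_lt_two), ← Real.log_pow, ← Real.log_pow]
  exact Real.log_le_log (by positivity) (by exact_mod_cast h2)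

lemma sum_LambdaK_not_coprime_le {x : ℝ} (hx : 1 ≤ x) {q : ℕ} (hq : 0 < q) :
    ∑ 𝔞 ∈ (finite_absNorm_le (K := K) x).toFinset with ¬ (absNorm 𝔞).Coprime q, LambdaK K 𝔞 ≤
      Module.finrank ℚ K * Real.log q / Real.log 2 * Real.log x := by
  have hq0 := span_natCast_ne_bot (K := K) hq
  set P := (UniqueFactorizationMonoid.normalizedFactors (span {(q : 𝓞 K)})).toFinset with hP
  set S := (finite_absNorm_le (K := K) x).toFinset.filter
    fun 𝔞 => ¬ (absNorm 𝔞).Coprime q ∧ IsPrimeIdealPower 𝔞 with hS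
  have hsum : ∑ 𝔞 ∈ (finite_absNorm_le (K := K) x).toFinset with ¬ (absNorm 𝔞).Coprime q,
      LambdaK K 𝔞 = ∑ 𝔞 ∈ S, Real.log (absNorm 𝔞.radical) := by
    rw [hS, ← Finset.filter_filter, Finset.sum_filter (IsPrimeIdealPower ·)]
    rfl
  have hrad {𝔭 : Ideal (𝓞 K)} {m : ℕ} (hp : 𝔭.IsPrime) (hm : 1 ≤ m) : (𝔭 ^ m).radical = 𝔭 := by
    rw [Ideal.radical_pow _ (by omega), hp.radical]
  have hmaps : ∀ 𝔞 ∈ S, 𝔞.radical ∈ P := by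
    intro 𝔞 h𝔞
    obtain ⟨-, hco, 𝔭, m, hp, h0, hm, rfl⟩ := Finset.mem_filter.1 h𝔞
    have hq𝔭 : (q : 𝓞 K) ∈ 𝔭 := natCast_mem_of_not_coprime_absNorm hp h0 fun h => hco (by
      rw [map_pow]
      exact h.pow_left m)
    rw [hrad hp hm, hP, Multiset.mem_toFinset, Ideal.mem_normalizedFactors_iff hq0]
    exact ⟨hp, (span_singleton_le_iff_mem _).2 hq𝔭⟩
  rw [hsum, ← Finset.sum_fiberwise_of_maps_to hmaps]
  have hfiber : ∀ 𝔭 ∈ P, ∑ 𝔞 ∈ S with 𝔞.radical = 𝔭, Real.log (absNorm 𝔞.radical) ≤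
      Real.log x := by
    intro 𝔭 h𝔭
    have hN : (1 : ℝ) < absNorm 𝔭 := by
      exact_mod_cast one_lt_absNorm_of_mem_normalizedFactors (Multiset.mem_toFinset.1 h𝔭)
    have hlog : 0 < Real.log (absNorm 𝔭) := Real.log_pos hN
    have hsub : S.filter (fun 𝔞 => 𝔞.radical = 𝔭) ⊆
        (Finset.Icc 1 ⌊Real.log x / Real.log (absNorm 𝔭)⌋₊).image (𝔭 ^ ·) := by
      intro 𝔞 h𝔞
      obtain ⟨hS', rfl⟩ := Finset.mem_filter.1 h𝔞
      obtain ⟨hle, -, 𝔭, m, hp, h0, hm, rfl⟩ := Finset.mem_filter.1 hS'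
      rw [hrad hp hm] at *
      refine Finset.mem_image.2 ⟨m, Finset.mem_Icc.2 ⟨hm, Nat.le_floor ?_⟩, rfl⟩
      rw [Set.Finite.mem_toFinset, Set.mem_ofPred_eq, map_pow, Nat.cast_pow] at hle
      rw [le_div_iff₀ hlog, ← Real.log_pow]
      exact Real.log_le_log (pow_pos (by linarith) m) hle
    have hcard : ((S.filter fun 𝔞 => 𝔞.radical = 𝔭).card : ℝ) ≤
        Real.log x / Real.log (absNorm 𝔭) := by
      have h1 := (Finset.card_le_card hsub).trans Finset.card_image_le
      rw [Nat.card_Icc, Nat.add_sub_cancel] at h1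
      exact (Nat.cast_le.2 h1).trans
        (Nat.floor_le (div_nonneg (Real.log_nonneg hx) hlog.le))
    have hconst : ∑ 𝔞 ∈ S with 𝔞.radical = 𝔭, Real.log (absNorm 𝔞.radical) =
        ∑ 𝔞 ∈ S with 𝔞.radical = 𝔭, Real.log (absNorm 𝔭) :=
      Finset.sum_congr rfl fun 𝔞 h => by rw [(Finset.mem_filter.1 h).2]
    rw [hconst, Finset.sum_const, nsmul_eq_mul]
    exact (le_div_iff₀ hlog).1 hcard
  refine (Finset.sum_le_sum hfiber).trans ?_
  rw [Finset.sum_const, nsmul_eq_mul]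
  exact mul_le_mul_of_nonneg_right (card_primeFactors_span_natCast_le hq) (Real.log_nonneg hx)

lemma norm_psiKChi'_sub_le {x : ℝ} (hx : 1 ≤ x) {q : ℕ} (hq : 0 < q)
    (χ : DirichletCharacter ℂ q) :
    ‖psiKChi' K x χ.primitiveCharacter - psiKChi' K x χ‖ ≤
      Module.finrank ℚ K * Real.log q / Real.log 2 * Real.log x := by
  have hsub : psiKChi' K x χ.primitiveCharacter - psiKChi' K x χ =
      psiKChi K x χ.primitiveCharacter - psiKChi K x χ := by
    simp only [psiKChi', primitiveCharacter_trivial_iff hq]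
    split_ifs
    · ring
    · rfl
  rw [hsub, psiKChi_eq_sum, psiKChi_eq_sum, ← Finset.sum_sub_distrib]
  refine le_trans ?_ (sum_LambdaK_not_coprime_le (K := K) hx hq)
  rw [Finset.sum_filter]
  refine (norm_sum_le _ _).trans (Finset.sum_le_sum fun 𝔞 _ => ?_)
  rw [← sub_mul, norm_mul, Complex.norm_real, Real.norm_of_nonneg (LambdaK_nonneg 𝔞)]
  by_cases h : (absNorm 𝔞).Coprime q
  · have heq := χ.primitiveCharacter_apply_of_isCoprime (Nat.isCoprime_iff_coprime.2 h)
    rw [Int.cast_natCast, Int.cast_natCast] at heq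
    simp [h, heq]
  · rw [if_pos h, χ.map_nonunit fun hu => h ((ZMod.isUnit_iff_coprime _ _).1 hu), sub_zero]
    exact mul_le_of_le_one_left (LambdaK_nonneg 𝔞) (DirichletCharacter.norm_le_one _ _)

end PrimesDividingModulus

/-- Reduction to primitive characters: for `x ≥ 2` and `Q ≥ 1`,
`∑_{q ≤ Q} ∑_{a ∈ G_q} (ψ_K(x;q,a) − x/φ_K(q))²
  ≪ Q (log Qx)⁴ + ∑_{q ≤ Q} (1/φ(q)) ∑_{χ mod q} |ψ'_K(x, χ*∘N)|²`,
where `χ*` is the primitive character inducing `χ`, the implied constant depending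
only on `K`. -/
theorem error_sum_le_primitive_char_sum (K : Type*) [Field K] [NumberField K]
    [IsGalois ℚ K] :
    ∃ C : ℝ, 0 < C ∧ ∀ x Q : ℝ, 2 ≤ x → 1 ≤ Q →
      ∑ q ∈ Finset.Icc 1 ⌊Q⌋₊, ∑ᶠ a ∈ Gq K q,
          (psiK K x q (a : ZMod q) - x / phiK K q) ^ 2 ≤
        C * (Q * Real.log (Q * x) ^ 4 +
          ∑ q ∈ Finset.Icc 1 ⌊Q⌋₊, (1 / q.totient : ℝ) *
            ∑ᶠ χ : DirichletCharacter ℂ q, ‖psiKChi' K x χ.primitiveCharacter‖ ^ 2) := by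
  have hn : (0 : ℝ) < Module.finrank ℚ K := Nat.cast_pos.2 Module.finrank_pos
  have hlog2 : 0 < Real.log 2 := Real.log_pos one_lt_two
  set c : ℝ := Module.finrank ℚ K / Real.log 2 with hc
  have hc0 : 0 < c := div_pos hn hlog2
  refine ⟨2 * c ^ 2 + 2, by positivity, fun x Q hx hQ => ?_⟩
  set M : ℝ := Real.log (Q * x)
  have hM0 : 0 ≤ M := Real.log_nonneg (by nlinarith)
  have hterm (q : ℕ) (hq : q ∈ Finset.Icc 1 ⌊Q⌋₊) :
      ∑ᶠ a ∈ Gq K q, (psiK K x q (a : ZMod q) - x / phiK K q) ^ 2 ≤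
        2 * c ^ 2 * M ^ 4 + 2 * ((1 / q.totient : ℝ) *
          ∑ᶠ χ : DirichletCharacter ℂ q, ‖psiKChi' K x χ.primitiveCharacter‖ ^ 2) := by
    obtain ⟨hq1, hqQ⟩ := Finset.mem_Icc.1 hq
    have : NeZero q := ⟨by omega⟩
    have hqQ' : (q : ℝ) ≤ Q := (Nat.le_floor_iff (by linarith)).1 hqQ
    have hq1' : (1 : ℝ) ≤ q := by exact_mod_cast hq1
    have hlogq : Real.log q ≤ M := Real.log_le_log (by linarith) (by nlinarith)
    have hlogx : Real.log x ≤ M := Real.log_le_log (by linarith) (by nlinarith)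
    have hχ (χ : DirichletCharacter ℂ q) :
        ‖psiKChi' K x χ‖ ^ 2 ≤
          2 * c ^ 2 * M ^ 4 + 2 * ‖psiKChi' K x χ.primitiveCharacter‖ ^ 2 := by
      have h1 := norm_psiKChi'_sub_le (K := K) (by linarith : 1 ≤ x) hq1 χ
      have h2 : Module.finrank ℚ K * Real.log q / Real.log 2 * Real.log x ≤ c * M ^ 2 := by
        have : Real.log q * Real.log x ≤ M * M :=
          mul_le_mul hlogq hlogx (Real.log_nonneg (by linarith)) hM0
        calc _ = c * (Real.log q * Real.log x) := by rw [hc]; ring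
          _ ≤ c * M ^ 2 := by rw [sq]; gcongr
      have h3 : ‖psiKChi' K x χ‖ ≤ ‖psiKChi' K x χ.primitiveCharacter‖ + c * M ^ 2 := by
        have := norm_le_norm_add_norm_sub (psiKChi' K x χ.primitiveCharacter) (psiKChi' K x χ)
        linarith
      calc ‖psiKChi' K x χ‖ ^ 2
          ≤ (‖psiKChi' K x χ.primitiveCharacter‖ + c * M ^ 2) ^ 2 := by gcongr
        _ ≤ 2 * (‖psiKChi' K x χ.primitiveCharacter‖ ^ 2 + (c * M ^ 2) ^ 2) := add_sq_le
        _ = _ := by ring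
    have hφ : (q.totient : ℝ) ≠ 0 := Nat.cast_ne_zero.2 (Nat.totient_pos.2 hq1).ne'
    have hcard : ((Finset.univ : Finset (DirichletCharacter ℂ q)).card : ℝ) = q.totient := by
      rw [Finset.card_univ, ← Nat.card_eq_fintype_card,
        DirichletCharacter.card_eq_totient_of_hasEnoughRootsOfUnity]
    calc _ ≤ (1 / q.totient : ℝ) * ∑ χ : DirichletCharacter ℂ q, ‖psiKChi' K x χ‖ ^ 2 :=
          finsum_sq_le_sum_norm_psiKChi' x hq1
      _ ≤ (1 / q.totient : ℝ) * ∑ χ : DirichletCharacter ℂ q,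
          (2 * c ^ 2 * M ^ 4 + 2 * ‖psiKChi' K x χ.primitiveCharacter‖ ^ 2) := by
          gcongr with χ
          exact hχ χ
      _ = _ := by
          rw [Finset.sum_add_distrib, Finset.sum_const, nsmul_eq_mul, hcard, ← Finset.mul_sum,
            finsum_eq_sum_of_fintype]
          field_simp
  refine (Finset.sum_le_sum hterm).trans ?_
  rw [Finset.sum_add_distrib, Finset.sum_const, Nat.card_Icc, Nat.add_sub_cancel, nsmul_eq_mul,
    ← Finset.mul_sum]
  set T := ∑ q ∈ Finset.Icc 1 ⌊Q⌋₊, (1 / q.totient : ℝ) *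
    ∑ᶠ χ : DirichletCharacter ℂ q, ‖psiKChi' K x χ.primitiveCharacter‖ ^ 2
  have hT : 0 ≤ T := Finset.sum_nonneg fun q _ =>
    mul_nonneg (by positivity) (finsum_nonneg fun χ => by positivity)
  have hfloor : (⌊Q⌋₊ : ℝ) ≤ Q := Nat.floor_le (by linarith)
  have h1 : (⌊Q⌋₊ : ℝ) * (2 * c ^ 2 * M ^ 4) ≤ Q * (2 * c ^ 2 * M ^ 4) := by gcongr
  have h2 : 0 ≤ Q * M ^ 4 := by positivity
  have h3 : 0 ≤ c ^ 2 * T := by positivity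
  nlinarith
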